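/- There exist α₀ ∈ (0, 1/2) and λ > 0 such that the following holds for every α ∈ (0, α₀]. Let s ∈ [1/4, 1/2], let M be a constant with |M| ≤ 1 and 0 < ε₁ ≤ 1, and let θ : ℝ × [−1, 0] → ℝ be continuous, continuously differentiable in t and twice continuously differentiable in x, satisfying ∂_t θ + M θ ∂_x θ + (−Δ)^s θ − ε₁ ∂_{xx} θ = 0 at every point of ℝ × [−1, 0]. Assume |θ| ≤ 1 on Q₁ and |θ(x,t)| ≤ |500 x|^{2α} for all |x| > 1 and t ∈ [−1, 0]. Then osc_{Q_{1/400}} θ ≤ 2 − λ; moreover λ does not depend on ε₁, M or s. -/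

import Mathlib

open MeasureTheory Real Set Filter

/-- The normalizing constant of the 1-D fractional Laplacian. -/
noncomputable def fracC (s : ℝ) : ℝ :=
  (4 : ℝ) ^ s * Real.Gamma (1 / 2 + s) / (Real.sqrt Real.pi * |Real.Gamma (-s)|)

/-- The fractional Laplacian `(-Δ)^s u (x)`. -/
noncomputable def fracLap (s : ℝ) (u : ℝ → ℝ) (x : ℝ) : ℝ :=
  fracC s * ∫ y : ℝ, (u x - u y) / |x - y| ^ (1 + 2 * s)

/-- A classical solution of the regularized fractional Burgers equation
`θ_t + θ θ_x + (-Δ)^s θ - ε₁ θ_xx = 0` on a set `D ⊆ ℝ × ℝ` (points written `(x, t)`):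
a bounded continuous function, continuously differentiable in `t` and twice continuously
differentiable in `x`, satisfying the equation at every point of `D`, where the fractional
Laplacian (acting in `x`) is given by an absolutely convergent integral. -/
structure IsClassicalSolution (s ε₁ : ℝ) (θ : ℝ → ℝ → ℝ) (D : Set (ℝ × ℝ)) : Prop where
  bounded : ∃ B : ℝ, ∀ p ∈ D, |θ p.1 p.2| ≤ B
  cont : ContinuousOn (fun p : ℝ × ℝ => θ p.1 p.2) D
  diff_t : ∀ p ∈ D, DifferentiableAt ℝ (fun t => θ p.1 t) p.2
  cont_dt : ContinuousOn (fun p : ℝ × ℝ => deriv (fun t => θ p.1 t) p.2) D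
  diff_x : ∀ p ∈ D, DifferentiableAt ℝ (fun x => θ x p.2) p.1
  diff_xx : ∀ p ∈ D, DifferentiableAt ℝ (deriv fun x => θ x p.2) p.1
  cont_dx : ContinuousOn (fun p : ℝ × ℝ => deriv (fun x => θ x p.2) p.1) D
  cont_dxx : ContinuousOn (fun p : ℝ × ℝ => deriv (deriv fun x => θ x p.2) p.1) D
  integrable : ∀ p ∈ D,
    Integrable fun y : ℝ => (θ p.1 p.2 - θ y p.2) / |p.1 - y| ^ (1 + 2 * s)
  eqn : ∀ p ∈ D,
    deriv (fun t => θ p.1 t) p.2 + θ p.1 p.2 * deriv (fun x => θ x p.2) p.1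
      + fracLap s (fun x => θ x p.2) p.1
      - ε₁ * deriv (deriv fun x => θ x p.2) p.1 = 0


/-- The truncated parabola squared, the spatial profile of the barrier of radius `r`. -/
noncomputable def bump (r x : ℝ) : ℝ := (max (r ^ 2 - x ^ 2) 0) ^ 2

theorem bump_nonneg (r x : ℝ) : 0 ≤ bump r x := sq_nonneg _

theorem bump_le_one {r : ℝ} (h0 : 0 ≤ r) (h1 : r ≤ 1) (x : ℝ) : bump r x ≤ 1 := by
  unfold bump
  have h : max (r ^ 2 - x ^ 2) 0 ≤ 1 := max_le (by nlinarith [sq_nonneg x]) zero_le_one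
  have h' : 0 ≤ max (r ^ 2 - x ^ 2) 0 := le_max_right _ _
  nlinarith

theorem bump_of_abs_lt {r x : ℝ} (hx : |x| < r) : bump r x = (r ^ 2 - x ^ 2) ^ 2 := by
  unfold bump
  rw [max_eq_left]
  have := sq_le_sq' (by linarith [neg_abs_le x]) ((le_abs_self x).trans hx.le)
  linarith

theorem bump_eq_zero {r x : ℝ} (hr : 0 ≤ r) (hx : r ≤ |x|) : bump r x = 0 := by
  unfold bump
  rw [max_eq_right, zero_pow two_ne_zero]
  have := pow_le_pow_left₀ hr hx 2
  rw [sq_abs] at this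
  linarith

theorem le_bump_of_nonneg {r x p : ℝ} (hp : 0 ≤ p) (h : p ≤ r ^ 2 - x ^ 2) :
    p ^ 2 ≤ bump r x :=
  pow_le_pow_left₀ hp (h.trans (le_max_left _ _)) 2

theorem two_mul_le_bump {r x p : ℝ} (hp : 0 ≤ p) :
    2 * p * (r ^ 2 - x ^ 2) - p ^ 2 ≤ bump r x := by
  unfold bump
  have := mul_le_mul_of_nonneg_left (le_max_left (r ^ 2 - x ^ 2) 0) hp
  nlinarith [sq_nonneg (max (r ^ 2 - x ^ 2) 0 - p)]

theorem bump_neg (r x : ℝ) : bump r (-x) = bump r x := by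
  simp [bump]

theorem bump_second_difference_of_nonneg {r x h : ℝ} (hr : 1 / 4 ≤ r) (hx : x < r)
    (hx0 : 0 ≤ x) (hh0 : 0 ≤ h) :
    2 * bump r x - bump r (x + h) - bump r (x - h) ≤ 100 * bump r x * h ^ 2 := by
  have hb : bump r x = (r ^ 2 - x ^ 2) ^ 2 := bump_of_abs_lt (by rwa [abs_of_nonneg hx0])
  have hp : 0 < r ^ 2 - x ^ 2 := by nlinarith
  set p := r ^ 2 - x ^ 2 with hpdef
  rcases le_total x (3 / 5 * r) with hc | hc
  · have h1 := two_mul_le_bump (r := r) (x := x + h) hp.le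
    have h2 := two_mul_le_bump (r := r) (x := x - h) hp.le
    have hp' : 1 / 25 ≤ p := by nlinarith
    have h3 : 2 * bump r x - bump r (x + h) - bump r (x - h) ≤ 4 * p * h ^ 2 := by
      rw [hb]; nlinarith
    have h4 : 4 * p ≤ 100 * p ^ 2 := by nlinarith
    rw [hb] at h3 ⊢
    nlinarith [mul_le_mul_of_nonneg_right h4 (sq_nonneg h)]
  · rcases le_total h x with hhx | hhx
    · suffices 2 * bump r x ≤ bump r (x + h) + bump r (x - h) by
        have : 0 ≤ 100 * bump r x * h ^ 2 := by have := bump_nonneg r x; positivity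
        linarith
      have hpm : 0 ≤ r ^ 2 - (x - h) ^ 2 := by nlinarith
      have h2 := le_bump_of_nonneg (r := r) (x := x - h) hpm le_rfl
      rcases le_total (x + h) r with hi | hi
      · have h1 := le_bump_of_nonneg (r := r) (x := x + h) (by nlinarith) le_rfl
        have h3 : 0 ≤ 12 * x ^ 2 - 4 * r ^ 2 := by nlinarith
        have h4 : (r ^ 2 - (x + h) ^ 2) ^ 2 + (r ^ 2 - (x - h) ^ 2) ^ 2
          = 2 * p ^ 2 + (12 * x ^ 2 - 4 * r ^ 2) * h ^ 2 + 2 * h ^ 4 := by rw [hpdef]; ring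
        have h5 : 0 ≤ h ^ 4 := by positivity
        nlinarith [mul_nonneg h3 (sq_nonneg h)]
      · have h1 := bump_nonneg r (x + h)
        have h3 : 3 / 2 * p ≤ r ^ 2 - (x - h) ^ 2 := by
          have ha : 4 * x * (r - x) ≤ r ^ 2 - (x - h) ^ 2 := by nlinarith
          have hd : 3 / 2 * p ≤ 4 * x * (r - x) := by nlinarith
          linarith
        have h4 : (3 / 2 * p) ^ 2 ≤ (r ^ 2 - (x - h) ^ 2) ^ 2 :=
          pow_le_pow_left₀ (by positivity) h3 2
        rw [hb]
        nlinarith [sq_nonneg p]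
    · have h1 := bump_nonneg r (x + h)
      have h2 := bump_nonneg r (x - h)
      have h3 := bump_nonneg r x
      have h4 : 2 ≤ 100 * h ^ 2 := by nlinarith
      nlinarith [mul_le_mul_of_nonneg_left h4 h3]

theorem bump_second_difference {r x : ℝ} (hr : 1 / 4 ≤ r) (hx : |x| < r) (h : ℝ) :
    2 * bump r x - bump r (x + h) - bump r (x - h) ≤ 100 * bump r x * h ^ 2 := by
  have key := bump_second_difference_of_nonneg hr hx (abs_nonneg x) (abs_nonneg h)
  rw [sq_abs] at key
  rcases abs_cases x with ⟨e, _⟩ | ⟨e, _⟩ <;> rcases abs_cases h with ⟨f, _⟩ | ⟨f, _⟩ <;>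
    rw [e, f] at key
  · exact key
  · rw [← sub_eq_add_neg, sub_neg_eq_add] at key; linarith
  · rw [bump_neg, show -x + h = -(x - h) by ring, show -x - h = -(x + h) by ring, bump_neg,
      bump_neg] at key
    linarith
  · rw [bump_neg, show -x + -h = -(x + h) by ring, show -x - -h = -(x - h) by ring, bump_neg,
      bump_neg] at key
    linarith

/-- The kernel tail `|y| ^ (-5/4)`, cut off inside the unit interval. -/
noncomputable def tail (y : ℝ) : ℝ := (Ioi (1 : ℝ)).indicator (fun r => r ^ (-(5 / 4) : ℝ)) |y|

theorem tail_of_one_lt {y : ℝ} (hy : 1 < |y|) : tail y = |y| ^ (-(5 / 4) : ℝ) :=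
  indicator_of_mem (s := Ioi (1 : ℝ)) hy _

theorem tail_of_le_one {y : ℝ} (hy : |y| ≤ 1) : tail y = 0 :=
  indicator_of_notMem (s := Ioi (1 : ℝ)) (not_lt.2 hy) _

theorem integral_tail : ∫ y, tail y = 8 := by
  unfold tail
  rw [integral_comp_abs (f := (Ioi (1 : ℝ)).indicator (fun r => r ^ (-(5 / 4) : ℝ))),
    setIntegral_indicator measurableSet_Ioi, Ioi_inter_Ioi, sup_of_le_right zero_le_one,
    integral_Ioi_rpow_of_lt (by norm_num) one_pos]
  norm_num

theorem integrable_tail : Integrable tail :=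
  Integrable.of_integral_ne_zero (by rw [integral_tail]; norm_num)

theorem exists_fracC_bounds :
    ∃ a b : ℝ, 0 < a ∧ ∀ s ∈ Icc (1 / 4 : ℝ) (1 / 2), a ≤ fracC s ∧ fracC s ≤ b := by
  have hG : ∀ s ∈ Icc (1 / 4 : ℝ) (1 / 2), ∀ m : ℕ, -s ≠ -m := by
    intro s hs m h
    have h1 : s = m := neg_injective h
    rcases m with _ | m
    · simp only [Nat.cast_zero] at h1; linarith [hs.1]
    · push_cast at h1; linarith [hs.2, Nat.cast_nonneg (α := ℝ) m]
  have hpos : ∀ s ∈ Icc (1 / 4 : ℝ) (1 / 2), 0 < Real.sqrt Real.pi * |Real.Gamma (-s)| :=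
    fun s hs => mul_pos (Real.sqrt_pos.2 Real.pi_pos) (abs_pos.2 (Real.Gamma_ne_zero (hG s hs)))
  have hc : ContinuousOn fracC (Icc (1 / 4) (1 / 2)) := by
    intro s hs
    have h1 : ContinuousAt (fun s => Real.Gamma (1 / 2 + s)) s :=
      ContinuousAt.comp (g := Real.Gamma) (Real.differentiableAt_Gamma fun m h => by
        linarith [hs.1, Nat.cast_nonneg (α := ℝ) m]).continuousAt (by fun_prop)
    have h2 : ContinuousAt (fun s => Real.Gamma (-s)) s :=
      ContinuousAt.comp (g := Real.Gamma)
        (Real.differentiableAt_Gamma (hG s hs)).continuousAt (by fun_prop)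
    have h3 : ContinuousAt (fun s : ℝ => (4 : ℝ) ^ s) s :=
      (Real.continuous_const_rpow (by norm_num)).continuousAt
    exact ((h3.mul h1).div (continuousAt_const.mul h2.abs) (hpos s hs).ne').continuousWithinAt
  have hne : (Icc (1 / 4 : ℝ) (1 / 2)).Nonempty := ⟨1 / 4, by norm_num⟩
  obtain ⟨s₀, hs₀, hmin⟩ := isCompact_Icc.exists_isMinOn hne hc
  obtain ⟨s₁, -, hmax⟩ := isCompact_Icc.exists_isMaxOn hne hc
  refine ⟨fracC s₀, fracC s₁, ?_, fun s hs => ⟨hmin hs, hmax hs⟩⟩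
  exact div_pos (mul_pos (by positivity) (Real.Gamma_pos_of_pos (by linarith [hs₀.1])))
    (hpos _ hs₀)

theorem div_rpow_le_of_le_sq {s b D h : ℝ} (hs : s ∈ Icc (1 / 4 : ℝ) (1 / 2)) (hb : 0 ≤ b)
    (hD : D ≤ b * h ^ 2) (hD' : D ≤ b) (hh : h ≠ 0) :
    D / |h| ^ (1 + 2 * s) ≤ b * ((Icc (-1 : ℝ) 1).indicator 1 h + tail h) := by
  have hpos : 0 < |h| := abs_pos.2 hh
  have hden : 0 < |h| ^ (1 + 2 * s) := rpow_pos_of_pos hpos _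
  rw [div_le_iff₀ hden]
  rcases le_or_gt |h| 1 with h1 | h1
  · rw [tail_of_le_one h1, indicator_of_mem (mem_Icc.2 (abs_le.1 h1))]
    have : |h| ^ (2 : ℝ) ≤ |h| ^ (1 + 2 * s) :=
      rpow_le_rpow_of_exponent_ge hpos h1 (by linarith [hs.2])
    rw [rpow_two, sq_abs] at this
    simpa using hD.trans (mul_le_mul_of_nonneg_left this hb)
  · rw [tail_of_one_lt h1,
      indicator_of_notMem (s := Icc (-1 : ℝ) 1) (fun hm => h1.not_ge (abs_le.2 hm)), zero_add, mul_assoc, ← rpow_add hpos]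
    have : 1 ≤ |h| ^ (-(5 / 4) + (1 + 2 * s)) := one_le_rpow h1.le (by linarith [hs.1])
    nlinarith

theorem rpow_sub_one_div_le_tail {s α x y : ℝ} (hs : s ∈ Icc (1 / 4 : ℝ) (1 / 2)) (hα : 0 < α)
    (hα' : α ≤ 1 / 8) (hx : |x| ≤ 3 / 4) (hy : 1 < |y|) :
    (|500 * y| ^ (2 * α) - 1) / |x - y| ^ (1 + 2 * s) ≤ 640 * α * tail y := by
  have hy0 : 0 < |y| := by linarith
  rw [tail_of_one_lt hy]
  have hnum : |500 * y| ^ (2 * α) - 1 ≤ 40 * α * |y| ^ (1 / 4 : ℝ) := by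
    have h0 : 0 ≤ |500 * y| := abs_nonneg _
    have h1 : |500 * y| ^ (1 / 4 : ℝ) ≤ 5 * |y| ^ (1 / 4 : ℝ) := by
      rw [abs_mul, mul_rpow (abs_nonneg _) hy0.le]
      refine mul_le_mul_of_nonneg_right ?_ (by positivity)
      calc |(500 : ℝ)| ^ (1 / 4 : ℝ) ≤ ((5 : ℝ) ^ (4 : ℝ)) ^ (1 / 4 : ℝ) :=
            rpow_le_rpow (by positivity) (by norm_num) (by norm_num)
        _ = 5 := by rw [← rpow_mul (by norm_num)]; norm_num
    have h2 : |500 * y| ^ (2 * α) = (1 + (|500 * y| ^ (1 / 4 : ℝ) - 1)) ^ (8 * α) := by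
      rw [add_sub_cancel, ← rpow_mul h0]; ring_nf
    have h3 := rpow_one_add_le_one_add_mul_self (s := |500 * y| ^ (1 / 4 : ℝ) - 1)
      (by linarith [rpow_nonneg h0 (1 / 4 : ℝ)]) (p := 8 * α) (by linarith) (by linarith)
    rw [h2]
    nlinarith
  have hden : |y| ^ (3 / 2 : ℝ) / 16 ≤ |x - y| ^ (1 + 2 * s) := by
    have h1 : |y| / 4 ≤ |x - y| := by
      have := abs_sub_abs_le_abs_sub y x
      rw [abs_sub_comm y x] at this
      linarith
    calc |y| ^ (3 / 2 : ℝ) / 16 ≤ |y| ^ (1 + 2 * s) / 4 ^ (1 + 2 * s) := by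
          refine div_le_div₀ (by positivity)
            (rpow_le_rpow_of_exponent_le hy.le (by linarith [hs.1])) (by positivity) ?_
          calc (4 : ℝ) ^ (1 + 2 * s) ≤ 4 ^ (2 : ℝ) :=
                rpow_le_rpow_of_exponent_le (by norm_num) (by linarith [hs.2])
            _ = 16 := by norm_num
      _ = (|y| / 4) ^ (1 + 2 * s) := (div_rpow hy0.le (by norm_num) _).symm
      _ ≤ |x - y| ^ (1 + 2 * s) := rpow_le_rpow (by positivity) h1 (by linarith [hs.1])
  have hpow : |y| ^ (1 / 4 : ℝ) = |y| ^ (-(5 / 4) : ℝ) * |y| ^ (3 / 2 : ℝ) := by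
    rw [← rpow_add hy0]; norm_num
  have h32 : 0 < |y| ^ (3 / 2 : ℝ) := rpow_pos_of_pos hy0 _
  rw [div_le_iff₀ (by linarith)]
  have h54 : 0 < |y| ^ (-(5 / 4) : ℝ) := rpow_pos_of_pos hy0 _
  calc _ ≤ _ := hnum
    _ = 640 * α * |y| ^ (-(5 / 4) : ℝ) * (|y| ^ (3 / 2 : ℝ) / 16) := by rw [hpow]; ring
    _ ≤ _ := mul_le_mul_of_nonneg_left hden (by positivity)

/-- The nonlocal term at a point where `1 - u` is touched from below by the barrier
`m * bump r`, up to an additive constant. -/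
theorem integral_contact_le {s α m r x : ℝ} {u : ℝ → ℝ} (hs : s ∈ Icc (1 / 4 : ℝ) (1 / 2))
    (hα : 0 < α) (hα' : α ≤ 1 / 8) (hr : 1 / 4 ≤ r) (hr' : r ≤ 3 / 4) (hx : |x| < r)
    (hm : 0 ≤ m) (hm' : m ≤ 1 / 2) (hu : Continuous u)
    (hint : Integrable fun y : ℝ => (u x - u y) / |x - y| ^ (1 + 2 * s))
    (hmin : ∀ y ∈ Icc (-1 : ℝ) 1, u y - u x ≤ m * (bump r x - bump r y))
    (hux : 1 - u x ≤ m * bump r x)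
    (hgrowth : ∀ y, 1 < |y| → u y ≤ |500 * y| ^ (2 * α)) :
    -(500 * (m * bump r x)) + (∫ y in (-1 : ℝ)..1, max (1 / 2 - u y) 0) / 4 - 5120 * α
      ≤ ∫ y, (u x - u y) / |x - y| ^ (1 + 2 * s) := by
  set I : ℝ → ℝ := fun y => (u x - u y) / |x - y| ^ (1 + 2 * s) with hI
  set R : ℝ → ℝ := fun y =>
    640 * α * tail y - (Icc (-1 : ℝ) 1).indicator (fun y => max (1 / 2 - u y) 0) y / 4 with hR
  have hbx := bump_nonneg r x
  have hpt : ∀ y, y ≠ x → -I y ≤ m * (bump r x - bump r y) / |x - y| ^ (1 + 2 * s) + R y := by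
    intro y hy
    have hxy : 0 < |x - y| := abs_pos.2 (sub_ne_zero.2 hy.symm)
    have hden : 0 < |x - y| ^ (1 + 2 * s) := rpow_pos_of_pos hxy _
    have hIy : -I y = (u y - u x) / |x - y| ^ (1 + 2 * s) := by rw [hI, ← neg_div, neg_sub]
    rw [hIy]
    rcases le_or_gt |y| 1 with h1 | h1
    · have hmem : y ∈ Icc (-1 : ℝ) 1 := abs_le.1 h1
      simp only [hR, tail_of_le_one h1, indicator_of_mem hmem]
      have hby : m * bump r y ≤ 1 / 2 := by
        have := bump_le_one (r := r) (by linarith) (by linarith) y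
        nlinarith [bump_nonneg r y]
      set g := max (1 / 2 - u y) 0 with hg
      have hg0 : 0 ≤ g := le_max_right _ _
      have hle : u y - u x ≤ m * (bump r x - bump r y) - g := by
        rcases max_cases (1 / 2 - u y) 0 with ⟨e, _⟩ | ⟨e, _⟩ <;> rw [hg, e]
        · linarith
        · linarith [hmin y hmem]
      have hk : |x - y| ^ (1 + 2 * s) ≤ 4 := by
        have h2 : |x - y| ≤ 2 := by
          have := abs_sub x y
          linarith
        calc |x - y| ^ (1 + 2 * s) ≤ 2 ^ (1 + 2 * s) :=
              rpow_le_rpow hxy.le h2 (by linarith [hs.1])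
          _ ≤ 2 ^ (2 : ℝ) := rpow_le_rpow_of_exponent_le (by norm_num) (by linarith [hs.2])
          _ = 4 := by norm_num
      have hgk : g / 4 ≤ g / |x - y| ^ (1 + 2 * s) := div_le_div_of_nonneg_left hg0 hden hk
      have := div_le_div_of_nonneg_right hle hden.le
      rw [sub_div _ g] at this
      linarith
    · have hnm : y ∉ Icc (-1 : ℝ) 1 := fun hm => h1.not_ge (abs_le.2 hm)
      simp only [hR, indicator_of_notMem hnm, bump_eq_zero (by linarith : 0 ≤ r)
        (by linarith : r ≤ |y|)]
      have h2 := rpow_sub_one_div_le_tail hs hα hα' (by linarith : |x| ≤ 3 / 4) h1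
      have hle : u y - u x ≤ m * (bump r x - 0) + (|500 * y| ^ (2 * α) - 1) := by
        linarith [hgrowth y h1]
      have := div_le_div_of_nonneg_right hle hden.le
      rw [add_div] at this
      linarith
  have hRint : Integrable R := by
    refine (integrable_tail.const_mul _).sub (Integrable.div_const ?_ 4)
    rw [integrable_indicator_iff measurableSet_Icc]
    exact ((continuous_const.sub hu).max continuous_const).continuousOn.integrableOn_Icc
  have hRval : ∫ y, R y = 5120 * α - (∫ y in (-1 : ℝ)..1, max (1 / 2 - u y) 0) / 4 := by
    have hi : Integrable ((Icc (-1 : ℝ) 1).indicator (fun y => max (1 / 2 - u y) 0)) := by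
      rw [integrable_indicator_iff measurableSet_Icc]
      exact ((continuous_const.sub hu).max continuous_const).continuousOn.integrableOn_Icc
    rw [integral_sub (integrable_tail.const_mul _) (hi.div_const 4), integral_const_mul,
      integral_div, integral_tail, integral_indicator measurableSet_Icc,
      integral_Icc_eq_integral_Ioc, ← intervalIntegral.integral_of_le (by norm_num)]
    ring
  set k : ℝ → ℝ := fun h => (Icc (-1 : ℝ) 1).indicator 1 h + tail h with hk
  have hone : Integrable ((Icc (-1 : ℝ) 1).indicator (1 : ℝ → ℝ)) := by
    rw [integrable_indicator_iff measurableSet_Icc]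
    exact continuous_one.continuousOn.integrableOn_Icc
  have hkint : Integrable k := hone.add integrable_tail
  have hkval : ∫ h, k h = 10 := by
    rw [integral_add hone integrable_tail, integral_tail, integral_indicator_one measurableSet_Icc]
    simp [Measure.real]
    norm_num
  have hplus : ∀ f : ℝ → ℝ, ∫ h, f (x + h) = ∫ y, f y := fun f => integral_add_left_eq_self f x
  have hminus : ∀ f : ℝ → ℝ, ∫ h, f (x - h) = ∫ y, f y := fun f =>
    integral_sub_left_eq_self f volume x
  have hsum : ∀ᵐ h : ℝ, -I (x + h) + -I (x - h)
      ≤ 100 * (m * bump r x) * k h + (R (x + h) + R (x - h)) := by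
    have hne : ∀ᵐ h : ℝ, h ≠ 0 := by simp [ae_iff]
    filter_upwards [hne] with h hh
    have h1 := hpt (x + h) (by simpa using hh)
    have h2 := hpt (x - h) (by simpa using hh)
    rw [sub_add_cancel_left, abs_neg] at h1
    rw [sub_sub_cancel] at h2
    have hD := bump_second_difference hr hx h
    have hp := bump_nonneg r (x + h)
    have hq := bump_nonneg r (x - h)
    have h3 := div_rpow_le_of_le_sq (b := 100 * (m * bump r x)) hs (by positivity)
      (D := m * (2 * bump r x - bump r (x + h) - bump r (x - h)))
      (by nlinarith [mul_le_mul_of_nonneg_left hD hm])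
      (by nlinarith [mul_nonneg hm hp, mul_nonneg hm hq, mul_nonneg hm hbx]) hh
    have h4 : m * (2 * bump r x - bump r (x + h) - bump r (x - h)) / |h| ^ (1 + 2 * s)
        = m * (bump r x - bump r (x + h)) / |h| ^ (1 + 2 * s)
          + m * (bump r x - bump r (x - h)) / |h| ^ (1 + 2 * s) := by rw [← add_div]; ring
    linarith
  have hI1 : Integrable fun h => -I (x + h) := (hint.comp_add_left x).neg
  have hI2 : Integrable fun h => -I (x - h) := (hint.comp_sub_left x).neg
  have hR1 : Integrable fun h => R (x + h) := hRint.comp_add_left x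
  have hR2 : Integrable fun h => R (x - h) := hRint.comp_sub_left x
  have hmono := integral_mono_ae (hI1.add hI2)
    ((hkint.const_mul (100 * (m * bump r x))).add (hR1.add hR2)) hsum
  simp only [Pi.add_apply] at hmono
  rw [integral_add hI1 hI2, integral_add (hkint.const_mul _) (by exact hR1.add hR2),
    integral_add hR1 hR2, integral_neg, integral_neg, integral_const_mul, hkval,
    hplus, hminus, hplus, hminus, hRval] at hmono
  linarith

theorem IsLocalMin.deriv_deriv_nonneg {f : ℝ → ℝ} {x : ℝ} (h : IsLocalMin f x)
    (hc : ContinuousAt f x) : 0 ≤ deriv (deriv f) x := by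
  by_contra! hneg
  have hmax := isLocalMax_of_deriv_deriv_neg hneg h.deriv_eq_zero hc
  have heq : f =ᶠ[nhds x] fun _ => f x := by
    filter_upwards [h, hmax] with y h1 h2 using le_antisymm h2 h1
  have h0 : deriv (deriv f) x = 0 := by
    rw [heq.deriv.deriv_eq]
    simp
  exact hneg.ne h0

theorem HasDerivAt.nonpos_of_forall_le_left {f : ℝ → ℝ} {d a t : ℝ} (hf : HasDerivAt f d t)
    (ha : a < t) (hmin : ∀ τ ∈ Icc a t, f t ≤ f τ) : d ≤ 0 := by
  have hslope := hf.tendsto_slope.mono_left (nhdsLT_le_nhdsNE t)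
  refine le_of_tendsto hslope ?_
  filter_upwards [Ioo_mem_nhdsLT ha] with τ hτ
  rw [slope_def_field]
  exact div_nonpos_of_nonneg_of_nonpos (sub_nonneg.2 (hmin τ ⟨hτ.1.le, hτ.2.le⟩))
    (sub_nonpos.2 hτ.2.le)

/-- A classical solution on `ℝ × [-1, 0]` of `θ_t + M θ θ_x + (-Δ)^s θ - ε₁ θ_xx = 0`, bounded
by `1` on the unit cylinder and by `|500 x| ^ (2 α)` outside. -/
structure IsControlledSolution (s M ε₁ α : ℝ) (θ : ℝ → ℝ → ℝ) : Prop where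
  cont : ContinuousOn (fun p : ℝ × ℝ => θ p.1 p.2) (univ ×ˢ Icc (-1 : ℝ) 0)
  diff_t : ∀ x, ∀ t ∈ Icc (-1 : ℝ) 0, DifferentiableAt ℝ (fun t => θ x t) t
  diff_x : ∀ x, ∀ t ∈ Icc (-1 : ℝ) 0, DifferentiableAt ℝ (fun x => θ x t) x
  diff_xx : ∀ x, ∀ t ∈ Icc (-1 : ℝ) 0, DifferentiableAt ℝ (deriv fun x => θ x t) x
  integrable : ∀ x, ∀ t ∈ Icc (-1 : ℝ) 0,
    Integrable fun y : ℝ => (θ x t - θ y t) / |x - y| ^ (1 + 2 * s)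
  eqn : ∀ x, ∀ t ∈ Icc (-1 : ℝ) 0,
    deriv (fun t => θ x t) t + M * θ x t * deriv (fun x => θ x t) x
      + fracLap s (fun x => θ x t) x - ε₁ * deriv (deriv fun x => θ x t) x = 0
  abs_le_one : ∀ x ∈ Icc (-1 : ℝ) 1, ∀ t ∈ Icc (-1 : ℝ) 0, |θ x t| ≤ 1
  growth : ∀ x : ℝ, 1 < |x| → ∀ t ∈ Icc (-1 : ℝ) 0, |θ x t| ≤ |500 * x| ^ (2 * α)

theorem fracLap_neg (s : ℝ) (u : ℝ → ℝ) (x : ℝ) :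
    fracLap s (fun x => -u x) x = -fracLap s u x := by
  unfold fracLap
  rw [← mul_neg, ← integral_neg]
  congr 2
  funext y
  rw [← neg_div]
  ring

namespace IsControlledSolution

variable {s M ε₁ α : ℝ} {θ : ℝ → ℝ → ℝ}

theorem neg (h : IsControlledSolution s M ε₁ α θ) :
    IsControlledSolution s (-M) ε₁ α (fun x t => -θ x t) where
  cont := h.cont.neg
  diff_t x t ht := (h.diff_t x t ht).fun_neg
  diff_x x t ht := (h.diff_x x t ht).fun_neg
  diff_xx x t ht := by
    rw [deriv.fun_neg']
    exact (h.diff_xx x t ht).fun_neg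
  integrable x t ht := by
    refine (h.integrable x t ht).neg.congr (Eventually.of_forall fun y => ?_)
    simp only [Pi.neg_apply]
    rw [← neg_div]
    ring
  eqn x t ht := by
    have := h.eqn x t ht
    have hxx : deriv (deriv fun x => -θ x t) x = -deriv (deriv fun x => θ x t) x := by
      rw [deriv.fun_neg', deriv.fun_neg]
    rw [fracLap_neg s (fun x => θ x t), hxx, deriv.fun_neg, deriv.fun_neg]
    linarith
  abs_le_one x hx t ht := by rw [abs_neg]; exact h.abs_le_one x hx t ht
  growth x hx t ht := by rw [abs_neg]; exact h.growth x hx t ht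

theorem continuous_slice (h : IsControlledSolution s M ε₁ α θ) {t : ℝ}
    (ht : t ∈ Icc (-1 : ℝ) 0) : Continuous fun x => θ x t :=
  continuous_iff_continuousAt.2 fun x => (h.diff_x x t ht).continuousAt

/-- The differential inequality at a point where the barrier `m * bump (1 / 4 - t)`, up to an
additive constant, touches `1 - θ` from below. -/
theorem le_of_contact (h : IsControlledSolution s M ε₁ α θ) (hs : s ∈ Icc (1 / 4 : ℝ) (1 / 2))
    (hM : |M| ≤ 1) (hε : 0 < ε₁) (hε' : ε₁ ≤ 1) (hα : 0 < α) (hα' : α ≤ 1 / 8)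
    (hc : 0 ≤ fracC s) {x t m m' δ : ℝ} (ht : t ∈ Icc (-(1 / 2) : ℝ) 0) (hx : |x| < 1 / 4 - t)
    (hm : 0 ≤ m) (hm' : m ≤ 1 / 2)
    (hmin : ∀ y ∈ Icc (-1 : ℝ) 1,
      θ y t - θ x t ≤ m * (bump (1 / 4 - t) x - bump (1 / 4 - t) y))
    (hux : 1 - θ x t ≤ m * bump (1 / 4 - t) x)
    (htime : -deriv (fun t => θ x t) t ≤ m' * ((1 / 4 - t) ^ 2 - x ^ 2) ^ 2
      - 4 * m * ((1 / 4 - t) ^ 2 - x ^ 2) * (1 / 4 - t) - δ) :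
    δ ≤ (m' + 100 * m) * bump (1 / 4 - t) x + fracC s * (500 * (m * bump (1 / 4 - t) x)
      - (∫ y in (-1 : ℝ)..1, max (1 / 2 - θ y t) 0) / 4 + 5120 * α) := by
  have ht1 : t ∈ Icc (-1 : ℝ) 0 := ⟨by linarith [ht.1], ht.2⟩
  set r := 1 / 4 - t with hr
  have hr1 : 1 / 4 ≤ r := by linarith [ht.2]
  have hr2 : r ≤ 3 / 4 := by linarith [ht.1]
  have hnl := integral_contact_le (u := fun y => θ y t) hs hα hα' hr1 hr2 hx hm hm'
    (h.continuous_slice ht1) (h.integrable x t ht1) hmin hux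
    (fun y hy => (le_abs_self _).trans (h.growth y hy t ht1))
  have hxx := abs_lt.1 hx
  have hbx := bump_of_abs_lt hx
  set f : ℝ → ℝ := fun y => -θ y t - m * (r ^ 2 - y ^ 2) ^ 2 with hf
  have hloc : IsLocalMin f x := by
    filter_upwards [Ioo_mem_nhds hxx.1 hxx.2] with y hy
    have h1 := hmin y ⟨by linarith [hy.1], by linarith [hy.2]⟩
    rw [hbx, bump_of_abs_lt (abs_lt.2 hy)] at h1
    simp only [hf]
    linarith
  have hder : ∀ y, HasDerivAt f (-deriv (fun x => θ x t) y + 4 * m * ((r ^ 2 - y ^ 2) * y)) y := by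
    intro y
    have h1 := (h.diff_x y t ht1).hasDerivAt.fun_neg
    have h2 := ((((hasDerivAt_id' y).fun_pow 2).const_sub (r ^ 2)).fun_pow 2).const_mul m
    refine (h1.sub h2).congr_deriv ?_
    push_cast
    ring
  have hd1 : deriv (fun x => θ x t) x = 4 * m * ((r ^ 2 - x ^ 2) * x) := by
    have := hloc.hasDerivAt_eq_zero (hder x)
    linarith
  have hd2 : deriv (deriv fun x => θ x t) x ≤ 4 * m * (r ^ 2 - 3 * x ^ 2) := by
    have h0 := hloc.deriv_deriv_nonneg (hder x).continuousAt
    have h1 : deriv f = fun y => -deriv (fun x => θ x t) y + 4 * m * ((r ^ 2 - y ^ 2) * y) :=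
      funext fun y => (hder y).deriv
    have h2 := (h.diff_xx x t ht1).hasDerivAt.fun_neg
    have h3 := ((((hasDerivAt_id' x).fun_pow 2).const_sub (r ^ 2)).fun_mul
      (hasDerivAt_id' x)).const_mul (4 * m)
    rw [h1, (h2.fun_add h3).deriv] at h0
    push_cast at h0
    linarith
  have hp : 0 < r ^ 2 - x ^ 2 := sub_pos.2 (sq_lt_sq' hxx.1 hxx.2)
  have hpoly : 4 * (r ^ 2 - 3 * x ^ 2) ≤ 100 * (r ^ 2 - x ^ 2) ^ 2 := by
    rcases le_total (r ^ 2) (3 * x ^ 2) with h1 | h1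
    · linarith [sq_nonneg (r ^ 2 - x ^ 2)]
    · have hr4 : (1 / 4) ^ 2 ≤ r ^ 2 := pow_le_pow_left₀ (by norm_num) hr1 2
      have h25 : 1 / 25 ≤ r ^ 2 - x ^ 2 := by linarith
      linarith [sq_nonneg x, mul_le_mul_of_nonneg_left h25 hp.le,
        sq (r ^ 2 - x ^ 2)]
  have hvisc : ε₁ * deriv (deriv fun x => θ x t) x ≤ 100 * m * (r ^ 2 - x ^ 2) ^ 2 := by
    have h1 : deriv (deriv fun x => θ x t) x ≤ 100 * m * (r ^ 2 - x ^ 2) ^ 2 := by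
      linarith [mul_le_mul_of_nonneg_left hpoly hm]
    have h2 : 0 ≤ 100 * m * (r ^ 2 - x ^ 2) ^ 2 := by positivity
    exact (mul_le_mul_of_nonneg_left h1 hε.le).trans (mul_le_of_le_one_left h2 hε')
  have hdrift : -(M * θ x t * (4 * m * ((r ^ 2 - x ^ 2) * x)))
      ≤ 4 * m * (r ^ 2 - x ^ 2) * r := by
    have h1 : |M * θ x t * x| ≤ r := by
      rw [abs_mul, abs_mul]
      have hθ := h.abs_le_one x ⟨by linarith, by linarith⟩ t ht1
      have : |M| * |θ x t| ≤ 1 := mul_le_one₀ hM (abs_nonneg _) hθ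
      exact (mul_le_of_le_one_left (abs_nonneg x) this).trans hx.le
    have h2 := (abs_le.1 h1).1
    have h3 : 0 ≤ 4 * m * (r ^ 2 - x ^ 2) := by positivity
    linarith [mul_le_mul_of_nonneg_left h2 h3]
  have heq := h.eqn x t ht1
  rw [hd1] at heq
  have hlap : fracC s * (-(500 * (m * bump r x))
      + (∫ y in (-1 : ℝ)..1, max (1 / 2 - θ y t) 0) / 4 - 5120 * α)
        ≤ fracLap s (fun x => θ x t) x := mul_le_mul_of_nonneg_left hnl hc
  rw [hbx] at hlap ⊢
  linarith

end IsControlledSolution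

/-- The amount by which `θ` stays below `1 / 2` on `[-1, 1]` at time `t`, with the time frozen
outside `[-1, 0]`. -/
noncomputable def deficit (θ : ℝ → ℝ → ℝ) (t : ℝ) : ℝ :=
  ∫ y in (-1 : ℝ)..1, max (1 / 2 - θ y (max (-1) (min t 0))) 0

/-- The amplitude of the barrier, with growth rate `c` and decay rate `K`. -/
noncomputable def amplitude (c K : ℝ) (θ : ℝ → ℝ → ℝ) (t : ℝ) : ℝ :=
  c * exp (-K * (t + 1)) * ∫ τ in (-(1 / 2) : ℝ)..t, deficit θ τ

theorem deficit_nonneg (θ : ℝ → ℝ → ℝ) (t : ℝ) : 0 ≤ deficit θ t :=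
  intervalIntegral.integral_nonneg (by norm_num) fun _ _ => le_max_right _ _

theorem clamp_mem (t : ℝ) : max (-1) (min t 0) ∈ Icc (-1 : ℝ) 0 :=
  ⟨le_max_left _ _, max_le (by norm_num) (min_le_right _ _)⟩

theorem deficit_of_mem {θ : ℝ → ℝ → ℝ} {t : ℝ} (ht : t ∈ Icc (-1 : ℝ) 0) :
    deficit θ t = ∫ y in (-1 : ℝ)..1, max (1 / 2 - θ y t) 0 := by
  unfold deficit
  rw [min_eq_left ht.2, max_eq_right ht.1]

namespace IsControlledSolution

variable {s M ε₁ α : ℝ} {θ : ℝ → ℝ → ℝ}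

theorem continuous_clamp (h : IsControlledSolution s M ε₁ α θ) :
    Continuous fun p : ℝ × ℝ => θ p.2 (max (-1) (min p.1 0)) :=
  h.cont.comp_continuous (f := fun p : ℝ × ℝ => (p.2, max (-1) (min p.1 0))) (by fun_prop)
    fun p => ⟨mem_univ _, clamp_mem p.1⟩

theorem continuous_deficit (h : IsControlledSolution s M ε₁ α θ) : Continuous (deficit θ) :=
  intervalIntegral.continuous_parametric_intervalIntegral_of_continuous'
    (f := fun t y => max (1 / 2 - θ y (max (-1) (min t 0))) 0)
    ((continuous_const.sub h.continuous_clamp).max continuous_const) _ _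

theorem deficit_le (h : IsControlledSolution s M ε₁ α θ) (t : ℝ) : deficit θ t ≤ 3 := by
  have hc : Continuous fun y => max (1 / 2 - θ y (max (-1) (min t 0))) 0 :=
    (continuous_const.sub (h.continuous_slice (clamp_mem t))).max continuous_const
  have := intervalIntegral.integral_mono_on (μ := volume) (a := -1) (b := 1) (by norm_num)
    (hc.intervalIntegrable _ _) (intervalIntegrable_const (c := (3 / 2 : ℝ))) fun y hy =>
      max_le (by linarith [(abs_le.1 (h.abs_le_one y hy _ (clamp_mem t))).1]) (by norm_num)
  rw [intervalIntegral.integral_const] at this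
  norm_num at this
  exact this

theorem hasDerivAt_amplitude (h : IsControlledSolution s M ε₁ α θ) (c K t : ℝ) :
    HasDerivAt (amplitude c K θ)
      (-K * amplitude c K θ t + c * exp (-K * (t + 1)) * deficit θ t) t := by
  have h1 : HasDerivAt (fun t => ∫ τ in (-(1 / 2) : ℝ)..t, deficit θ τ) (deficit θ t) t :=
    (h.continuous_deficit.integral_hasStrictDerivAt _ t).hasDerivAt
  have h2 := ((((hasDerivAt_id' t).add_const (1 : ℝ)).const_mul (-K)).exp).const_mul c
  refine (h2.fun_mul h1).congr_deriv ?_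
  unfold amplitude
  ring

theorem amplitude_nonneg {c K t : ℝ} (hc : 0 ≤ c) (ht : -(1 / 2) ≤ t) :
    0 ≤ amplitude c K θ t :=
  mul_nonneg (by positivity)
    (intervalIntegral.integral_nonneg ht fun τ _ => deficit_nonneg θ τ)

theorem amplitude_le (h : IsControlledSolution s M ε₁ α θ) {c K t : ℝ} (hc : 0 ≤ c)
    (hc' : c ≤ 1 / 4) (hK : 0 ≤ K) (ht : t ∈ Icc (-(1 / 2) : ℝ) 0) :
    amplitude c K θ t ≤ 1 / 2 := by
  have h1 : ∫ τ in (-(1 / 2) : ℝ)..t, deficit θ τ ≤ 3 / 2 := by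
    have := intervalIntegral.integral_mono_on (μ := volume) ht.1
      (h.continuous_deficit.intervalIntegrable _ _) (intervalIntegrable_const (c := (3 : ℝ)))
      fun τ _ => h.deficit_le τ
    rw [intervalIntegral.integral_const, smul_eq_mul] at this
    linarith [ht.2]
  have h0 : 0 ≤ ∫ τ in (-(1 / 2) : ℝ)..t, deficit θ τ :=
    intervalIntegral.integral_nonneg ht.1 fun τ _ => deficit_nonneg θ τ
  have h2 : exp (-K * (t + 1)) ≤ 1 := exp_le_one_iff.2 (by nlinarith [ht.1])
  have h3 : c * exp (-K * (t + 1)) ≤ 1 / 4 := by nlinarith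
  unfold amplitude
  nlinarith

theorem barrier_le (h : IsControlledSolution s M ε₁ α θ) (hs : s ∈ Icc (1 / 4 : ℝ) (1 / 2))
    (hM : |M| ≤ 1) (hε : 0 < ε₁) (hε' : ε₁ ≤ 1) (hα : 0 < α) (hα' : α ≤ 1 / 8)
    {b c δ : ℝ} (hb : fracC s ≤ b) (hc : 0 < c) (hc' : c ≤ 1 / 4)
    (hca : c ≤ fracC s / 4) (hδ : 5120 * b * α < δ) {x t : ℝ} (hx : x ∈ Icc (-1 : ℝ) 1)
    (ht : t ∈ Icc (-(1 / 2) : ℝ) 0) :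
    amplitude c (100 + 500 * b) θ t * bump (1 / 4 - t) x - δ * (t + 1 / 2) ≤ 1 - θ x t := by
  have hC : 0 < fracC s := by linarith
  have hb0 : 0 < b := by linarith
  have hδ0 : 0 < δ := lt_trans (by positivity) hδ
  set A := amplitude c (100 + 500 * b) θ with hA
  set F : ℝ × ℝ → ℝ := fun p =>
    1 - θ p.1 p.2 - A p.2 * bump (1 / 4 - p.2) p.1 + δ * (p.2 + 1 / 2) with hF
  have hAc : Continuous A := continuous_iff_continuousAt.2 fun t =>
    (h.hasDerivAt_amplitude c (100 + 500 * b) t).continuousAt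
  have hFc : ContinuousOn F (Icc (-1) 1 ×ˢ Icc (-(1 / 2)) 0) := by
    have h1 := h.cont.mono (prod_mono (subset_univ (Icc (-1 : ℝ) 1))
      (Icc_subset_Icc_left (by norm_num : (-1 : ℝ) ≤ -(1 / 2))))
    have h2 : Continuous fun p : ℝ × ℝ => A p.2 * bump (1 / 4 - p.2) p.1 := by
      unfold bump
      fun_prop
    have h3 : Continuous fun p : ℝ × ℝ => δ * (p.2 + 1 / 2) := by fun_prop
    exact ((continuousOn_const.sub h1).sub h2.continuousOn).add h3.continuousOn
  obtain ⟨⟨x₀, t₀⟩, ⟨hx₀, ht₀⟩, hmin⟩ :=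
    (isCompact_Icc.prod isCompact_Icc).exists_isMinOn ⟨(x, t), hx, ht⟩ hFc
  suffices 0 ≤ F (x₀, t₀) by
    have h1 := hmin (show (x, t) ∈ Icc (-1 : ℝ) 1 ×ˢ Icc (-(1 / 2) : ℝ) 0 from ⟨hx, ht⟩)
    have h2 := this.trans h1
    simp only [hF] at h2
    linarith
  by_contra! hneg
  simp only at hx₀ ht₀
  have hmin' : ∀ y ∈ Icc (-1 : ℝ) 1, ∀ τ ∈ Icc (-(1 / 2) : ℝ) 0, F (x₀, t₀) ≤ F (y, τ) :=
    fun y hy τ hτ => hmin (show (y, τ) ∈ _ ×ˢ _ from ⟨hy, hτ⟩)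
  simp only [hF] at hneg hmin'
  have ht₀' : t₀ ∈ Icc (-1 : ℝ) 0 := ⟨by linarith [ht₀.1], ht₀.2⟩
  have hw : 0 ≤ 1 - θ x₀ t₀ := by linarith [(abs_le.1 (h.abs_le_one x₀ hx₀ t₀ ht₀')).2]
  have hdt : 0 ≤ δ * (t₀ + 1 / 2) := mul_nonneg hδ0.le (by linarith [ht₀.1])
  have hA0 : 0 ≤ A t₀ := amplitude_nonneg hc.le ht₀.1
  have hA1 : A t₀ ≤ 1 / 2 := h.amplitude_le hc.le hc' (by positivity) ht₀
  have hx₀r : |x₀| < 1 / 4 - t₀ := by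
    by_contra! hge
    rw [bump_eq_zero (by linarith [ht₀.2]) hge] at hneg
    linarith
  have ht₀l : -(1 / 2) < t₀ := by
    refine lt_of_le_of_ne ht₀.1 fun he => ?_
    have : A t₀ = 0 := by rw [hA, ← he]; simp [amplitude]
    rw [this] at hneg
    linarith
  have hxx := abs_lt.1 hx₀r
  have hbump := bump_of_abs_lt hx₀r
  have hAd := h.hasDerivAt_amplitude c (100 + 500 * b) t₀
  rw [← hA] at hAd
  set A' := -(100 + 500 * b) * A t₀ + c * exp (-(100 + 500 * b) * (t₀ + 1)) * deficit θ t₀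
    with hA'
  have htime : -deriv (fun t => θ x₀ t) t₀ ≤ A' * ((1 / 4 - t₀) ^ 2 - x₀ ^ 2) ^ 2
      - 4 * A t₀ * ((1 / 4 - t₀) ^ 2 - x₀ ^ 2) * (1 / 4 - t₀) - δ := by
    have h1 := (h.diff_t x₀ t₀ ht₀').hasDerivAt
    have h2 : HasDerivAt (fun τ : ℝ => ((1 / 4 - τ) ^ 2 - x₀ ^ 2) ^ 2)
        (-4 * ((1 / 4 - t₀) ^ 2 - x₀ ^ 2) * (1 / 4 - t₀)) t₀ := by
      refine (((((hasDerivAt_id' t₀).const_sub (1 / 4)).fun_pow 2).sub_const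
        (x₀ ^ 2)).fun_pow 2).congr_deriv ?_
      push_cast
      ring
    have h3 := ((hasDerivAt_id' t₀).add_const (1 / 2 : ℝ)).const_mul δ
    have h4 := (((h1.const_sub 1).fun_sub (hAd.fun_mul h2)).fun_add h3).nonpos_of_forall_le_left
      ht₀l fun τ hτ => by
        have h5 := hmin' x₀ hx₀ τ ⟨hτ.1, hτ.2.trans ht₀.2⟩
        rwa [hbump, bump_of_abs_lt (hx₀r.trans_le (by linarith [hτ.2]))] at h5
    linarith
  have hcontact := h.le_of_contact hs hM hε hε' hα hα' hC.le ht₀ hx₀r hA0 hA1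
    (fun y hy => by linarith [hmin' y hy t₀ ht₀]) (by linarith) htime
  rw [← deficit_of_mem ht₀'] at hcontact
  have hB0 := bump_nonneg (1 / 4 - t₀) x₀
  have hB1 := bump_le_one (r := 1 / 4 - t₀) (by linarith [ht₀.2]) (by linarith [ht₀.1]) x₀
  set B := bump (1 / 4 - t₀) x₀
  have hD0 := deficit_nonneg θ t₀
  set D := deficit θ t₀
  have hexp : exp (-(100 + 500 * b) * (t₀ + 1)) ≤ 1 :=
    exp_le_one_iff.2 (by nlinarith [ht₀.1])
  have h1 : c * exp (-(100 + 500 * b) * (t₀ + 1)) * D * B ≤ fracC s / 4 * D := by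
    calc _ ≤ c * exp (-(100 + 500 * b) * (t₀ + 1)) * D * 1 :=
          mul_le_mul_of_nonneg_left hB1 (by positivity)
      _ ≤ c * 1 * D * 1 := by gcongr
      _ ≤ fracC s / 4 * D := by nlinarith
  have h2 : fracC s * (A t₀ * B) ≤ b * (A t₀ * B) :=
    mul_le_mul_of_nonneg_right hb (mul_nonneg hA0 hB0)
  have h3 : fracC s * α ≤ b * α := mul_le_mul_of_nonneg_right hb hα.le
  rw [hA'] at hcontact
  linarith

theorem le_one_sub (h : IsControlledSolution s M ε₁ α θ) (hs : s ∈ Icc (1 / 4 : ℝ) (1 / 2))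
    (hM : |M| ≤ 1) (hε : 0 < ε₁) (hε' : ε₁ ≤ 1) (hα : 0 < α) (hα' : α ≤ 1 / 8)
    {b c : ℝ} (hb : fracC s ≤ b) (hc : 0 < c) (hc' : c ≤ 1 / 4) (hca : c ≤ fracC s / 4)
    (hαb : 5120 * b * α < c * exp (-(100 + 500 * b)) / 1000)
    (hdef : 9 / 20 ≤ ∫ τ in (-(1 / 2) : ℝ)..(-(1 / 20)), deficit θ τ) {x t : ℝ}
    (hx : x ∈ Icc (-(1 / 400) : ℝ) (1 / 400)) (ht : t ∈ Icc (-(1 / 20) : ℝ) 0) :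
    θ x t ≤ 1 - c * exp (-(100 + 500 * b)) / 2000 := by
  have hb0 : 0 < b := by linarith
  have key := h.barrier_le hs hM hε hε' hα hα' hb hc hc' hca hαb (x := x) (t := t)
    ⟨by linarith [hx.1], by linarith [hx.2]⟩ ⟨by linarith [ht.1], ht.2⟩
  set e := exp (-(100 + 500 * b)) with he
  have he0 : 0 < e := exp_pos _
  have hamp : c * e * (9 / 20) ≤ amplitude c (100 + 500 * b) θ t := by
    have h1 : e ≤ exp (-(100 + 500 * b) * (t + 1)) := exp_le_exp.2 (by nlinarith [ht.2])
    have h2 : 9 / 20 ≤ ∫ τ in (-(1 / 2) : ℝ)..t, deficit θ τ := by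
      rw [← intervalIntegral.integral_add_adjacent_intervals (b := -(1 / 20))
        (h.continuous_deficit.intervalIntegrable _ _)
        (h.continuous_deficit.intervalIntegrable _ _)]
      have := intervalIntegral.integral_nonneg (μ := volume) ht.1 fun τ _ => deficit_nonneg θ τ
      linarith
    unfold amplitude
    gcongr
  have hbump : 1 / 400 ≤ bump (1 / 4 - t) x := by
    refine le_trans (by norm_num) (le_bump_of_nonneg (p := 1 / 20) (by norm_num) ?_)
    nlinarith [ht.2, hx.1, hx.2]
  have h1 : c * e * (9 / 20) * (1 / 400) ≤ amplitude c (100 + 500 * b) θ t * bump (1 / 4 - t) x :=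
    mul_le_mul hamp hbump (by norm_num) ((by positivity : 0 ≤ c * e * (9 / 20)).trans hamp)
  have h2 : c * e / 1000 * (t + 1 / 2) ≤ c * e / 1000 * (1 / 2) :=
    mul_le_mul_of_nonneg_left (by linarith [ht.2]) (by positivity)
  linarith [mul_pos hc he0]

theorem two_le_deficit_add_deficit_neg (h : IsControlledSolution s M ε₁ α θ) (t : ℝ) :
    2 ≤ deficit θ t + deficit (fun x t => -θ x t) t := by
  have hs := h.continuous_slice (clamp_mem t)
  have hc : Continuous fun y => max (1 / 2 - θ y (max (-1) (min t 0))) 0 :=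
    (continuous_const.sub hs).max continuous_const
  have hc' : Continuous fun y => max (1 / 2 - -θ y (max (-1) (min t 0))) 0 :=
    (continuous_const.sub hs.neg).max continuous_const
  unfold deficit
  rw [← intervalIntegral.integral_add (hc.intervalIntegrable _ _) (hc'.intervalIntegrable _ _)]
  have := intervalIntegral.integral_mono_on (μ := volume) (a := -1) (b := 1) (by norm_num)
    (intervalIntegrable_const (c := (1 : ℝ))) ((hc.add hc').intervalIntegrable _ _) fun y _ => by
      have h1 := le_max_left (1 / 2 - θ y (max (-1) (min t 0))) 0
      have h2 := le_max_left (1 / 2 - -θ y (max (-1) (min t 0))) 0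
      show (1 : ℝ) ≤ _ + _
      linarith
  rw [intervalIntegral.integral_const] at this
  norm_num at this ⊢
  exact this

end IsControlledSolution

/-- the oscillation lemma. For `α` small enough, a solution with `|θ| ≤ 1`
on `Q₁` and `|θ(x,t)| ≤ |500 x|^{2α}` outside has oscillation at most `2 - lam` on
`Q_{1/400}`, where `lam` does not depend on `ε₁`, `M` or `s`. -/
theorem oscillation_lemma :
    ∃ α₀ lam : ℝ, 0 < α₀ ∧ α₀ < 1 / 2 ∧ 0 < lam ∧
      ∀ α : ℝ, 0 < α → α ≤ α₀ →
      ∀ s M ε₁ : ℝ, s ∈ Set.Icc (1 / 4 : ℝ) (1 / 2) → |M| ≤ 1 →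
        0 < ε₁ → ε₁ ≤ 1 →
        ∀ θ : ℝ → ℝ → ℝ,
        -- continuous on ℝ × [-1,0], continuously differentiable in t and twice
        -- continuously differentiable in x there
        ContinuousOn (fun p : ℝ × ℝ => θ p.1 p.2) (Set.univ ×ˢ Set.Icc (-1 : ℝ) 0) →
        (∀ p : ℝ × ℝ, p.2 ∈ Set.Icc (-1 : ℝ) 0 →
          DifferentiableAt ℝ (fun t => θ p.1 t) p.2) →
        ContinuousOn (fun p : ℝ × ℝ => deriv (fun t => θ p.1 t) p.2)
          (Set.univ ×ˢ Set.Icc (-1 : ℝ) 0) →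
        (∀ p : ℝ × ℝ, p.2 ∈ Set.Icc (-1 : ℝ) 0 →
          DifferentiableAt ℝ (fun x => θ x p.2) p.1) →
        (∀ p : ℝ × ℝ, p.2 ∈ Set.Icc (-1 : ℝ) 0 →
          DifferentiableAt ℝ (deriv fun x => θ x p.2) p.1) →
        ContinuousOn (fun p : ℝ × ℝ => deriv (fun x => θ x p.2) p.1)
          (Set.univ ×ˢ Set.Icc (-1 : ℝ) 0) →
        ContinuousOn (fun p : ℝ × ℝ => deriv (deriv fun x => θ x p.2) p.1)
          (Set.univ ×ˢ Set.Icc (-1 : ℝ) 0) →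
        (∀ p : ℝ × ℝ, p.2 ∈ Set.Icc (-1 : ℝ) 0 →
          Integrable fun y : ℝ => (θ p.1 p.2 - θ y p.2) / |p.1 - y| ^ (1 + 2 * s)) →
        -- the equation θ_t + M θ θ_x + (-Δ)^s θ - ε₁ θ_xx = 0 on ℝ × [-1,0]
        (∀ p : ℝ × ℝ, p.2 ∈ Set.Icc (-1 : ℝ) 0 →
          deriv (fun t => θ p.1 t) p.2
            + M * θ p.1 p.2 * deriv (fun x => θ x p.2) p.1
            + fracLap s (fun x => θ x p.2) p.1
            - ε₁ * deriv (deriv fun x => θ x p.2) p.1 = 0) →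
        -- |θ| ≤ 1 on Q₁ = [-1,1] × [-1,0]
        (∀ x ∈ Set.Icc (-1 : ℝ) 1, ∀ t ∈ Set.Icc (-1 : ℝ) 0, |θ x t| ≤ 1) →
        -- growth bound outside
        (∀ x : ℝ, 1 < |x| → ∀ t ∈ Set.Icc (-1 : ℝ) 0,
          |θ x t| ≤ |500 * x| ^ (2 * α)) →
        -- oscillation on Q_{1/400} = [-1/400, 1/400] × [-(1/400)^{2s}, 0]
        ∀ x ∈ Set.Icc (-(1 / 400) : ℝ) (1 / 400),
          ∀ t ∈ Set.Icc (-((1 / 400 : ℝ) ^ (2 * s))) 0,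
            ∀ x' ∈ Set.Icc (-(1 / 400) : ℝ) (1 / 400),
              ∀ t' ∈ Set.Icc (-((1 / 400 : ℝ) ^ (2 * s))) 0,
                θ x t - θ x' t' ≤ 2 - lam := by
  obtain ⟨a, b, ha, hab⟩ := exists_fracC_bounds
  have hquarter := hab (1 / 4) (by norm_num)
  have hb : 0 < b := ha.trans_le (hquarter.1.trans hquarter.2)
  set c := min (1 / 4) (a / 4) with hc
  have hc0 : 0 < c := lt_min (by norm_num) (by linarith)
  set μ := c * exp (-(100 + 500 * b)) with hμ
  have hμ0 : 0 < μ := mul_pos hc0 (exp_pos _)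
  refine ⟨min (1 / 8) (μ / (10000000 * b)), μ / 2000, lt_min (by norm_num) (by positivity),
    (min_le_left _ _).trans_lt (by norm_num), by positivity, ?_⟩
  intro α hα hαle s M ε₁ hs hM hε hε' θ hcont hdt _ hdx hdxx _ _ hint heqn hone hgrowth
    x hx t ht x' hx' t' ht'
  have h : IsControlledSolution s M ε₁ α θ :=
    { cont := hcont
      diff_t := fun x t ht => hdt (x, t) ht
      diff_x := fun x t ht => hdx (x, t) ht
      diff_xx := fun x t ht => hdxx (x, t) ht
      integrable := fun x t ht => hint (x, t) ht
      eqn := fun x t ht => heqn (x, t) ht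
      abs_le_one := hone
      growth := hgrowth }
  have hα8 : α ≤ 1 / 8 := hαle.trans (min_le_left _ _)
  have hαb : 5120 * b * α < μ / 1000 := by
    have h1 := hαle.trans (min_le_right _ _)
    rw [le_div_iff₀ (by positivity)] at h1
    have := mul_pos hb hα
    linarith
  have hca : c ≤ fracC s / 4 := (min_le_right _ _).trans (by linarith [(hab s hs).1])
  have htime : (1 / 400 : ℝ) ^ (2 * s) ≤ 1 / 20 := by
    calc (1 / 400 : ℝ) ^ (2 * s) ≤ (1 / 400) ^ (1 / 2 : ℝ) :=
          rpow_le_rpow_of_exponent_ge (by norm_num) (by norm_num) (by linarith [hs.1])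
      _ = (((1 / 20 : ℝ)) ^ (2 : ℝ)) ^ (1 / 2 : ℝ) := by norm_num
      _ = 1 / 20 := by rw [← rpow_mul (by norm_num)]; norm_num
  have ht20 : t ∈ Icc (-(1 / 20) : ℝ) 0 := ⟨by linarith [ht.1], ht.2⟩
  have ht20' : t' ∈ Icc (-(1 / 20) : ℝ) 0 := ⟨by linarith [ht'.1], ht'.2⟩
  have habs := abs_le.1 (hone x ⟨by linarith [hx.1], by linarith [hx.2]⟩ t
    ⟨by linarith [ht20.1], ht.2⟩)
  have habs' := abs_le.1 (hone x' ⟨by linarith [hx'.1], by linarith [hx'.2]⟩ t'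
    ⟨by linarith [ht20'.1], ht'.2⟩)
  have hsum : 9 / 10 ≤ (∫ τ in (-(1 / 2) : ℝ)..(-(1 / 20)), deficit θ τ)
      + ∫ τ in (-(1 / 2) : ℝ)..(-(1 / 20)), deficit (fun x t => -θ x t) τ := by
    rw [← intervalIntegral.integral_add (h.continuous_deficit.intervalIntegrable _ _)
      (h.neg.continuous_deficit.intervalIntegrable _ _)]
    have := intervalIntegral.integral_mono_on (μ := volume) (a := -(1 / 2)) (b := -(1 / 20))
      (by norm_num) (intervalIntegrable_const (c := (2 : ℝ)))
      ((h.continuous_deficit.add h.neg.continuous_deficit).intervalIntegrable _ _)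
      fun τ _ => h.two_le_deficit_add_deficit_neg τ
    rw [intervalIntegral.integral_const] at this
    norm_num at this ⊢
    exact this
  rcases le_total (9 / 20) (∫ τ in (-(1 / 2) : ℝ)..(-(1 / 20)), deficit θ τ) with hd | hd
  · have := h.le_one_sub hs hM hε hε' hα hα8 (hab s hs).2 hc0 (min_le_left _ _) hca hαb hd
      hx ht20
    linarith
  · have := h.neg.le_one_sub hs (by rwa [abs_neg]) hε hε' hα hα8 (hab s hs).2 hc0
      (min_le_left _ _) hca hαb (by linarith) hx' ht20'
    linarith
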